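/- Let $0 < \delta < 1$, let $F_{\min} \le F_{\max}$ be real numbers, and let $(L_i)_{i \ge 0}$ and $(U_i)_{i \ge 0}$ be sequences of real numbers satisfying, for all $i \ge 0$: $L_i \le F_{\min}$, $F_{\max} \le U_i$, $U_{i+1} - L_i \le (1 + \delta)(F_{\max} - L_i)$, and $U_i - L_{i+1} \le (1 + \delta)(U_i - F_{\min})$. Then for every $n \ge 0$, $U_n - L_n \le \delta^n (U_0 - L_0) + (1 + \delta) \frac{1 - \delta^n}{1 - \delta} (F_{\max} - F_{\min})$; in particular, $\limsup_{n \to \infty} (U_n - L_n) \le \frac{1 + \delta}{1 - \delta} (F_{\max} - F_{\min})$. -/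

import Mathlib

/-!
Adding the two update inequalities for index `n` and subtracting `U n - L n` shows that the width
`w n = U n - L n` obeys the affine recurrence `w (n + 1) ≤ δ * w n + (1 + δ) * (Fmax - Fmin)`.
Unrolling it gives a geometric sum, and letting `n → ∞` gives the bound on the limsup.
-/

open Filter Finset Topology

lemma limsup_le_of_eventuallyLE_of_tendsto {ι α : Type*} [ConditionallyCompleteLinearOrder α]
    [TopologicalSpace α] [OrderTopology α] {f : Filter ι} [f.NeBot] {u v : ι → α} {a : α}
    (huv : u ≤ᶠ[f] v) (hv : Tendsto v f (𝓝 a)) (hu : f.IsCoboundedUnder (· ≤ ·) u) :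
    limsup u f ≤ a :=
  (limsup_le_limsup huv hu hv.isBoundedUnder_le).trans_eq hv.limsup_eq

lemma le_pow_mul_add_mul_geom_sum_of_succ_le {R : Type*} [CommSemiring R] [PartialOrder R]
    [IsOrderedRing R] {u : ℕ → R} {q b : R} (hq : 0 ≤ q) (hu : ∀ n, u (n + 1) ≤ q * u n + b)
    (n : ℕ) : u n ≤ q ^ n * u 0 + b * ∑ i ∈ range n, q ^ i := by
  have unrolled : u n ≤ u 0 * q ^ n + ∑ k ∈ range n, b * q ^ (n - (k + 1)) := by
    simpa using discrete_gronwall_prod_general (c := fun _ ↦ q) (b := fun _ ↦ b)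
      (fun k _ ↦ hu k) (fun _ _ ↦ hq) n.zero_le
  calc
    u n ≤ u 0 * q ^ n + ∑ k ∈ range n, b * q ^ (n - (k + 1)) := unrolled
    _ = q ^ n * u 0 + b * ∑ k ∈ range n, q ^ (n - 1 - k) := by
      simp only [mul_comm (u 0), mul_sum, Nat.sub_sub, add_comm]
    _ = q ^ n * u 0 + b * ∑ i ∈ range n, q ^ i := by rw [sum_range_reflect (q ^ ·)]

lemma le_pow_mul_add_mul_div_of_succ_le {K : Type*} [Field K] [PartialOrder K] [IsOrderedRing K]
    {u : ℕ → K} {q b : K} (hq : 0 ≤ q) (hq1 : q ≠ 1) (hu : ∀ n, u (n + 1) ≤ q * u n + b) (n : ℕ) :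
    u n ≤ q ^ n * u 0 + b * ((1 - q ^ n) / (1 - q)) := by
  rw [← neg_div_neg_eq, neg_sub, neg_sub, ← geom_sum_eq hq1]
  exact le_pow_mul_add_mul_geom_sum_of_succ_le hq hu n

lemma limsup_le_div_one_sub_of_succ_le {u : ℕ → ℝ} {q b : ℝ} (hq : 0 ≤ q) (hq1 : q < 1)
    (hu : ∀ n, u (n + 1) ≤ q * u n + b) (hbdd : IsCoboundedUnder (· ≤ ·) atTop u) :
    limsup u atTop ≤ b / (1 - q) := by
  have bound_tendsto : Tendsto (fun n ↦ q ^ n * u 0 + b * ∑ i ∈ range n, q ^ i) atTop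
      (𝓝 (b / (1 - q))) := by
    simpa [div_eq_mul_inv] using
      ((tendsto_pow_atTop_nhds_zero_of_lt_one hq hq1).mul_const (u 0)).add
        ((hasSum_geometric_of_lt_one hq hq1).tendsto_sum_nat.const_mul b)
  exact limsup_le_of_eventuallyLE_of_tendsto
    (.of_forall (le_pow_mul_add_mul_geom_sum_of_succ_le hq hu)) bound_tendsto hbdd

lemma sub_le_mul_sub_add_of_range_update {R : Type*} [CommRing R] [PartialOrder R]
    [IsOrderedAddMonoid R] {δ m M l u l' u' : R} (hu' : u' - l ≤ (1 + δ) * (M - l))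
    (hl' : u - l' ≤ (1 + δ) * (u - m)) :
    u' - l' ≤ δ * (u - l) + (1 + δ) * (M - m) :=
  calc
    u' - l' = (u' - l) + (u - l') - (u - l) := by ring
    _ ≤ (1 + δ) * (M - l) + (1 + δ) * (u - m) - (u - l) := by gcongr
    _ = δ * (u - l) + (1 + δ) * (M - m) := by ring

/-- convergence of the range-approximation scheme. If `0 < δ < 1`
and the sequences of bounds satisfy `Lᵢ ≤ F_min ≤ F_max ≤ Uᵢ`,
`U_{i+1} - Lᵢ ≤ (1+δ)(F_max - Lᵢ)` and `Uᵢ - L_{i+1} ≤ (1+δ)(Uᵢ - F_min)`, then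
`U_n - L_n ≤ δⁿ(U₀ - L₀) + (1+δ)·(1-δⁿ)/(1-δ)·(F_max - F_min)` for all `n`, and
`limsup (U_n - L_n) ≤ (1+δ)/(1-δ)·(F_max - F_min)`. -/
theorem stmt_17 (δ : ℝ) (hδ0 : 0 < δ) (hδ1 : δ < 1)
    (Fmin Fmax : ℝ) (hF : Fmin ≤ Fmax)
    (L U : ℕ → ℝ)
    (hL : ∀ i, L i ≤ Fmin) (hU : ∀ i, Fmax ≤ U i)
    (hUL : ∀ i, U (i + 1) - L i ≤ (1 + δ) * (Fmax - L i))
    (hLU : ∀ i, U i - L (i + 1) ≤ (1 + δ) * (U i - Fmin)) :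
    (∀ n, U n - L n ≤
        δ ^ n * (U 0 - L 0) + (1 + δ) * ((1 - δ ^ n) / (1 - δ)) * (Fmax - Fmin)) ∧
    Filter.limsup (fun n => U n - L n) Filter.atTop
      ≤ (1 + δ) / (1 - δ) * (Fmax - Fmin) := by
  have width_succ_le (n : ℕ) :
      U (n + 1) - L (n + 1) ≤ δ * (U n - L n) + (1 + δ) * (Fmax - Fmin) :=
    sub_le_mul_sub_add_of_range_update (hUL n) (hLU n)
  have width_bddBelow : IsBoundedUnder (· ≥ ·) atTop fun n ↦ U n - L n :=
    isBoundedUnder_of ⟨Fmax - Fmin, fun n ↦ sub_le_sub (hU n) (hL n)⟩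
  constructor
  · intro n
    rw [mul_right_comm]
    exact le_pow_mul_add_mul_div_of_succ_le (u := fun n ↦ U n - L n) hδ0.le hδ1.ne width_succ_le n
  · rw [div_mul_eq_mul_div]
    exact limsup_le_div_one_sub_of_succ_le hδ0.le hδ1 width_succ_le
      width_bddBelow.isCoboundedUnder_le
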